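/- Assume f satisfies (f_reg), (f_eq), (f_0), and in the case R1 = 0 assume additionally either (f_subl) or (f_subc). Then there exists d* > 1 such that for every d ≥ d* and every solution u of the Cauchy problem with datum d on [R1,R2], one has u'(r) < 0 for every r ∈ (R1,R2]. In particular, every radial solution u of the Neumann problem on [R1,R2] satisfies u(R1) < d*. -/

import Mathlib

open Real Set Filter Topology

noncomputable def phip (p s : ℝ) : ℝ := |s| ^ (p - 2) * s

def Freg (f : ℝ → ℝ) : Prop :=
  ContinuousOn f (Ici 0) ∧ ContDiffOn ℝ 1 f (Ioi 0)

def Feq (f : ℝ → ℝ) : Prop :=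
  f 0 = 0 ∧ f 1 = 0 ∧ (∀ s : ℝ, 0 < s → s < 1 → f s < 0) ∧ (∀ s : ℝ, 1 < s → 0 < f s)

def Fzero (p : ℝ) (f : ℝ → ℝ) : Prop :=
  ∃ c : ℝ, ∀ᶠ s in 𝓝[>] (0:ℝ), c ≤ f s / s ^ (p - 1)

noncomputable def pstar (p : ℝ) (N : ℕ) : EReal :=
  if p < (N:ℝ) then (((N:ℝ) * p / ((N:ℝ) - p) : ℝ) : EReal) else ⊤

noncomputable def fstar (f : ℝ → ℝ) (s : ℝ) : ℝ := sSup (f '' Icc 1 s)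

noncomputable def Fint (f : ℝ → ℝ) (s : ℝ) : ℝ := ∫ σ in (1:ℝ)..s, f σ

def Fsubl (p : ℝ) (f : ℝ → ℝ) : Prop :=
  ∃ M : ℝ, 0 < M ∧ ∀ ε > 0, ∀ᶠ s in atTop, f s / s ^ (p - 1) ≤ M + ε

def FsubcWith (p : ℝ) (N : ℕ) (f : ℝ → ℝ) (η : ℝ) : Prop :=
  (∀ c : ℝ, ∃ᶠ s in atTop, c < f s / s ^ (p - 1)) ∧
  0 < η ∧ η < 1 ∧
  ∃ L : ℝ, (L : EReal) < pstar p N ∧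
    ∀ᶠ s in atTop, fstar f s * s / Fint f (η * s) ≤ L

def Fsubc (p : ℝ) (N : ℕ) (f : ℝ → ℝ) : Prop := ∃ η : ℝ, FsubcWith p N f η

/-- A radial solution of the Neumann problem on `[R1,R2]`. -/
def NeumannSol (p : ℝ) (N : ℕ) (R1 R2 : ℝ) (f u : ℝ → ℝ) : Prop :=
  (∀ x ∈ Icc R1 R2, DifferentiableAt ℝ u x) ∧
  ContinuousOn (deriv u) (Icc R1 R2) ∧
  (∀ x ∈ Icc R1 R2, 0 < u x) ∧
  deriv u R1 = 0 ∧ deriv u R2 = 0 ∧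
  ContinuousOn (fun x => x ^ (N - 1) * phip p (deriv u x)) (Icc R1 R2) ∧
  ∀ x ∈ Ioc R1 R2,
    HasDerivAt (fun t => t ^ (N - 1) * phip p (deriv u t)) (-(x ^ (N - 1)) * f (u x)) x

noncomputable def fhat (f : ℝ → ℝ) (s : ℝ) : ℝ := if 0 ≤ s then f s else 0

noncomputable def Fhat (f : ℝ → ℝ) (s : ℝ) : ℝ := ∫ σ in (1:ℝ)..s, fhat f σ

/-- A solution of the Cauchy problem with datum `d`, for the nonlinearity `g`. -/
def CauchySol (p : ℝ) (N : ℕ) (R1 R2 : ℝ) (g u : ℝ → ℝ) (d : ℝ) : Prop :=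
  (∀ x ∈ Icc R1 R2, DifferentiableAt ℝ u x) ∧
  ContinuousOn (deriv u) (Icc R1 R2) ∧
  u R1 = d ∧ deriv u R1 = 0 ∧
  ContinuousOn (fun x => x ^ (N - 1) * phip p (deriv u x)) (Icc R1 R2) ∧
  ∀ x ∈ Ioc R1 R2,
    HasDerivAt (fun t => t ^ (N - 1) * phip p (deriv u t)) (-(x ^ (N - 1)) * g (u x)) x

noncomputable def rOne (R1 R2 : ℝ) (u : ℝ → ℝ) : ℝ :=
  sSup {x | x ∈ Icc R1 R2 ∧ ∀ s ∈ Ico R1 x, 0 < u s}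

noncomputable def rZero (R2 η d : ℝ) (u : ℝ → ℝ) : ℝ :=
  sSup {x | x ∈ Icc 0 R2 ∧ ∀ s ∈ Ico 0 x, η * d < u s}

noncomputable def energy (p : ℝ) (f u : ℝ → ℝ) (x : ℝ) : ℝ :=
  |deriv u x| ^ p / (p / (p - 1)) + Fhat f (u x)

def NonConstOn (R1 R2 : ℝ) (u : ℝ → ℝ) : Prop :=
  ∃ x ∈ Icc R1 R2, ∃ x' ∈ Icc R1 R2, u x ≠ u x'

def DistinctOn (R1 R2 : ℝ) (u v : ℝ → ℝ) : Prop :=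
  ∃ x ∈ Icc R1 R2, u x ≠ v x

noncomputable def nOverPstar (p : ℝ) (N : ℕ) : ℝ :=
  if p < (N:ℝ) then ((N:ℝ) - p) / p else 0

noncomputable def flux (p : ℝ) (N : ℕ) (u : ℝ → ℝ) (x : ℝ) : ℝ :=
  x ^ (N - 1) * phip p (deriv u x)

lemma phip_of_neg {p s : ℝ} (hs : s < 0) : phip p s = -(-s) ^ (p - 1) := by
  have h : 0 < -s := by linarith
  have : p - 1 = p - 2 + 1 := by ring
  rw [phip, abs_of_neg hs, this, Real.rpow_add h, Real.rpow_one]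
  ring

lemma phip_neg_iff {p s : ℝ} : phip p s < 0 ↔ s < 0 := by
  constructor
  · intro h
    by_contra! hs
    exact absurd h (not_lt.2 (mul_nonneg (by positivity) hs))
  · intro hs
    rw [phip_of_neg hs]
    have : 0 < (-s) ^ (p - 1) := Real.rpow_pos_of_pos (by linarith) _
    linarith

lemma flux_neg_iff {p : ℝ} {N : ℕ} {u : ℝ → ℝ} {x : ℝ} (hx : 0 < x) :
    flux p N u x < 0 ↔ deriv u x < 0 := by
  have : 0 < x ^ (N - 1) := by positivity
  rw [flux, ← phip_neg_iff (p := p) (s := deriv u x)]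
  exact ⟨fun h => by by_contra! h'; exact absurd h (not_lt.2 (mul_nonneg this.le h')),
    mul_neg_of_pos_of_neg this⟩

lemma exists_first_nonneg {h : ℝ → ℝ} {a b : ℝ} (hc : ContinuousOn h (Icc a b)) (ha : h a < 0)
    (hb : ∃ y ∈ Icc a b, 0 ≤ h y) :
    ∃ x ∈ Ioc a b, h x = 0 ∧ ∀ z ∈ Ico a x, h z < 0 := by
  have hcl : IsClosed (Icc a b ∩ h ⁻¹' Ici 0) :=
    hc.preimage_isClosed_of_isClosed isClosed_Icc isClosed_Ici
  have hcp : IsCompact (Icc a b ∩ h ⁻¹' Ici 0) :=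
    isCompact_Icc.of_isClosed_subset hcl inter_subset_left
  obtain ⟨y, hy, hy0⟩ := hb
  obtain ⟨x, ⟨hx, hx0⟩, hmin⟩ := hcp.exists_isLeast ⟨y, hy, hy0⟩
  have hlt : ∀ z ∈ Ico a x, h z < 0 := by
    intro z hz
    by_contra! hz0
    exact absurd (hmin ⟨⟨hz.1, hz.2.le.trans hx.2⟩, hz0⟩) (not_le.2 hz.2)
  have hax : a < x := by
    rcases hx.1.eq_or_lt with rfl | h'
    · exact absurd hx0 (not_le.2 ha)
    · exact h'
  refine ⟨x, ⟨hax, hx.2⟩, le_antisymm ?_ hx0, hlt⟩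
  have hcx : ContinuousWithinAt h (Ico a x) x :=
    (hc x hx).mono fun z hz => ⟨hz.1, hz.2.le.trans hx.2⟩
  have hcl' : x ∈ closure (Ico a x) := by
    rw [closure_Ico hax.ne]; exact right_mem_Icc.2 hax.le
  have : (𝓝[Ico a x] x).NeBot := mem_closure_iff_nhdsWithin_neBot.1 hcl'
  exact le_of_tendsto hcx.tendsto
    (by filter_upwards [self_mem_nhdsWithin] with z hz using (hlt z hz).le)

namespace CauchySol

variable {p : ℝ} {N : ℕ} {R1 R2 d : ℝ} {g u : ℝ → ℝ}

lemma flux_left (S : CauchySol p N R1 R2 g u d) : flux p N u R1 = 0 := by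
  simp [flux, phip, S.2.2.2.1]

lemma continuousOn_flux (S : CauchySol p N R1 R2 g u d) :
    ContinuousOn (flux p N u) (Icc R1 R2) := S.2.2.2.2.1

lemma hasDerivAt_flux (S : CauchySol p N R1 R2 g u d) {x : ℝ} (hx : x ∈ Ioc R1 R2) :
    HasDerivAt (flux p N u) (-(x ^ (N - 1)) * g (u x)) x := S.2.2.2.2.2 x hx

lemma continuousOn (S : CauchySol p N R1 R2 g u d) : ContinuousOn u (Icc R1 R2) :=
  fun x hx => (S.1 x hx).continuousAt.continuousWithinAt

lemma exists_deriv_eq_slope (S : CauchySol p N R1 R2 g u d) {x y : ℝ} (hx : R1 ≤ x) (hxy : x < y)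
    (hy : y ≤ R2) : ∃ c ∈ Ioo x y, deriv u c = (u y - u x) / (y - x) :=
  _root_.exists_deriv_eq_slope u hxy (S.continuousOn.mono (Icc_subset_Icc hx hy))
    fun z hz => (S.1 z ⟨hx.trans hz.1.le, hz.2.le.trans hy⟩).differentiableWithinAt

lemma flux_sub_le (S : CauchySol p N R1 R2 g u d) {x y C : ℝ} (hx : R1 ≤ x) (hxy : x ≤ y)
    (hy : y ≤ R2) (hC : ∀ t ∈ Ioo x y, -(t ^ (N - 1)) * g (u t) ≤ C) :
    flux p N u y - flux p N u x ≤ C * (y - x) := by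
  have hd : ∀ t ∈ Ioo x y, HasDerivAt (flux p N u) (-(t ^ (N - 1)) * g (u t)) t := fun t ht =>
    S.hasDerivAt_flux ⟨hx.trans_lt ht.1, ht.2.le.trans hy⟩
  refine (convex_Icc x y).image_sub_le_mul_sub_of_deriv_le
    (S.continuousOn_flux.mono (Icc_subset_Icc hx hy)) ?_ ?_ x (left_mem_Icc.2 hxy) y
    (right_mem_Icc.2 hxy) hxy
  · rw [interior_Icc]
    exact fun t ht => (hd t ht).differentiableAt.differentiableWithinAt
  · rw [interior_Icc]
    exact fun t ht => (hd t ht).deriv.trans_le (hC t ht)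

lemma le_flux_sub (S : CauchySol p N R1 R2 g u d) {x y C : ℝ} (hx : R1 ≤ x) (hxy : x ≤ y)
    (hy : y ≤ R2) (hC : ∀ t ∈ Ioo x y, C ≤ -(t ^ (N - 1)) * g (u t)) :
    C * (y - x) ≤ flux p N u y - flux p N u x := by
  have hd : ∀ t ∈ Ioo x y, HasDerivAt (flux p N u) (-(t ^ (N - 1)) * g (u t)) t := fun t ht =>
    S.hasDerivAt_flux ⟨hx.trans_lt ht.1, ht.2.le.trans hy⟩
  refine (convex_Icc x y).mul_sub_le_image_sub_of_le_deriv
    (S.continuousOn_flux.mono (Icc_subset_Icc hx hy)) ?_ ?_ x (left_mem_Icc.2 hxy) y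
    (right_mem_Icc.2 hxy) hxy
  · rw [interior_Icc]
    exact fun t ht => (hd t ht).differentiableAt.differentiableWithinAt
  · rw [interior_Icc]
    exact fun t ht => (hC t ht).trans_eq (hd t ht).deriv.symm

lemma strictAntiOn_flux (S : CauchySol p N R1 R2 g u d) (hR1 : 0 ≤ R1)
    (hpos : ∀ s, 1 < s → 0 < g s) {b : ℝ} (hb : b ≤ R2) (hu : ∀ x ∈ Ico R1 b, 1 < u x) :
    StrictAntiOn (flux p N u) (Icc R1 b) := by
  refine strictAntiOn_of_deriv_neg (convex_Icc _ _)
    (S.continuousOn_flux.mono (Icc_subset_Icc le_rfl hb)) fun x hx => ?_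
  rw [interior_Icc] at hx
  rw [(S.hasDerivAt_flux ⟨hx.1, hx.2.le.trans hb⟩).deriv]
  have hx0 : 0 < x := hR1.trans_lt hx.1
  have := mul_pos (pow_pos hx0 (N - 1)) (hpos _ (hu x ⟨hx.1.le, hx.2⟩))
  linarith

lemma flux_neg (S : CauchySol p N R1 R2 g u d) (hR1 : 0 ≤ R1)
    (hpos : ∀ s, 1 < s → 0 < g s) {b : ℝ} (hb : b ≤ R2) (hu : ∀ x ∈ Ico R1 b, 1 < u x)
    {x : ℝ} (hx : x ∈ Ioc R1 b) : flux p N u x < 0 := by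
  rw [← S.flux_left]
  exact S.strictAntiOn_flux hR1 hpos hb hu ⟨le_rfl, hx.1.le.trans hx.2⟩ ⟨hx.1.le, hx.2⟩ hx.1

lemma strictAntiOn (S : CauchySol p N R1 R2 g u d) (hR1 : 0 ≤ R1)
    (hpos : ∀ s, 1 < s → 0 < g s) {b : ℝ} (hb : b ≤ R2) (hu : ∀ x ∈ Ico R1 b, 1 < u x) :
    StrictAntiOn u (Icc R1 b) := by
  refine strictAntiOn_of_deriv_neg (convex_Icc _ _)
    (S.continuousOn.mono (Icc_subset_Icc le_rfl hb)) fun x hx => ?_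
  rw [interior_Icc] at hx
  exact (flux_neg_iff (hR1.trans_lt hx.1)).1 (S.flux_neg hR1 hpos hb hu ⟨hx.1, hx.2.le⟩)

/-- It suffices to control the flux after the first time the solution reaches the value `1`. -/
lemma deriv_neg_of_first_hit (S : CauchySol p N R1 R2 g u d) (hR1 : 0 ≤ R1)
    (hpos : ∀ s, 1 < s → 0 < g s) (hd : 1 < d)
    (H : ∀ r ∈ Ioc R1 R2, u r = 1 → (∀ x ∈ Ico R1 r, 1 < u x) →
      ∀ x ∈ Icc r R2, flux p N u x < 0) :
    ∀ x ∈ Ioc R1 R2, deriv u x < 0 := by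
  intro x hx
  rw [← flux_neg_iff (p := p) (N := N) (hR1.trans_lt hx.1)]
  by_cases hall : ∀ x ∈ Icc R1 R2, 1 < u x
  · exact S.flux_neg hR1 hpos le_rfl (fun y hy => hall y ⟨hy.1, hy.2.le⟩) hx
  · push Not at hall
    obtain ⟨y, hy, hy1⟩ := hall
    obtain ⟨r, hr, hr1, hlt⟩ := exists_first_nonneg (h := fun t => 1 - u t)
      (continuousOn_const.sub S.continuousOn) (by simp only [S.2.2.1]; linarith)
      ⟨y, hy, by linarith⟩
    have hlt' : ∀ x ∈ Ico R1 r, 1 < u x := fun z hz => by have := hlt z hz; linarith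
    rcases le_total r x with h | h
    · exact H r hr (by linarith) hlt' x ⟨h, hx.2⟩
    · exact S.flux_neg hR1 hpos hr.2 hlt' ⟨hx.1, h⟩

lemma flux_neg_of_nonpos (S : CauchySol p N R1 R2 g u d) (hR1 : 0 ≤ R1)
    (hneg : ∀ s ≤ 0, g s = 0) {r : ℝ} (hr : r ∈ Ioc R1 R2) (hur : u r ≤ 0)
    (hfr : flux p N u r < 0) : ∀ x ∈ Icc r R2, flux p N u x < 0 := by
  by_contra! hcon
  obtain ⟨x, hx, hx0, hlt⟩ := exists_first_nonneg
    (S.continuousOn_flux.mono (Icc_subset_Icc hr.1.le le_rfl)) hfr hcon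
  have hanti : AntitoneOn u (Icc r x) := by
    refine antitoneOn_of_deriv_nonpos (convex_Icc _ _)
      (S.continuousOn.mono (Icc_subset_Icc hr.1.le hx.2)) ?_ ?_
    all_goals rw [interior_Icc]
    · exact fun t ht =>
        (S.1 t ⟨hr.1.le.trans ht.1.le, ht.2.le.trans hx.2⟩).differentiableWithinAt
    · exact fun t ht => ((flux_neg_iff (hR1.trans_lt (hr.1.trans ht.1))).1
        (hlt t ⟨ht.1.le, ht.2⟩)).le
  have := S.flux_sub_le (x := r) (y := x) (C := 0) hr.1.le hx.1.le hx.2 fun t ht => by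
    rw [hneg _ ((hanti ⟨le_rfl, hx.1.le⟩ ⟨ht.1.le, ht.2.le⟩ ht.1.le).trans hur)]
    simp
  linarith

lemma flux_le_add (S : CauchySol p N R1 R2 g u d) (hR1 : 0 ≤ R1) {B : ℝ} (hB0 : 0 ≤ B)
    (hB : ∀ s, -B ≤ g s) {x y : ℝ} (hx : R1 ≤ x) (hxy : x ≤ y) (hy : y ≤ R2) :
    flux p N u y ≤ flux p N u x + B * y ^ (N - 1) * (y - x) := by
  have := S.flux_sub_le (x := x) (y := y) (C := B * y ^ (N - 1)) hx hxy hy fun t ht => by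
    have ht0 : 0 ≤ t := hR1.trans (hx.trans ht.1.le)
    have h1 : t ^ (N - 1) ≤ y ^ (N - 1) := pow_le_pow_left₀ ht0 ht.2.le _
    have h2 : 0 ≤ t ^ (N - 1) := by positivity
    nlinarith [hB (u t), mul_le_mul_of_nonneg_left h1 hB0,
      mul_le_mul_of_nonneg_left (hB (u t)) h2]
  linarith

lemma flux_neg_of_lt (S : CauchySol p N R1 R2 g u d) (hR1 : 0 ≤ R1) {B : ℝ} (hB0 : 0 ≤ B)
    (hB : ∀ s, -B ≤ g s) {r : ℝ} (hr : r ∈ Ioc R1 R2)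
    (hfr : flux p N u r < -(B * R2 ^ (N - 1) * R2)) : ∀ x ∈ Icc r R2, flux p N u x < 0 := by
  intro x hx
  have h1 := S.flux_le_add hR1 hB0 hB hr.1.le hx.1 hx.2
  have hr0 : 0 < r := hR1.trans_lt hr.1
  have hx0 : 0 < x := hr0.trans_le hx.1
  have h2 : B * x ^ (N - 1) * (x - r) ≤ B * R2 ^ (N - 1) * R2 := by
    have : 0 ≤ x - r := by linarith [hx.1]
    have : 0 ≤ R2 := by linarith [hx.2]
    gcongr
    · exact hx.2
    · linarith [hx.2]
  linarith

/-- If the solution is steep when it reaches `1`, compared with the radius, then it becomes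
negative before its derivative can vanish. -/
lemma flux_neg_of_steep (S : CauchySol p N R1 R2 g u d) (hp : 1 < p) (hN : 1 ≤ N) (hR1 : 0 ≤ R1)
    (hneg : ∀ s ≤ 0, g s = 0) {B : ℝ} (hB0 : 0 ≤ B) (hB : ∀ s, -B ≤ g s) {r A : ℝ}
    (hr : r ∈ Ioc R1 R2) (hur : u r = 1) (hfr : deriv u r < 0) (hA : A ≤ -deriv u r * r)
    (hA1 : 1 ≤ A * (2 ^ N : ℝ)⁻¹ ^ (1 / (p - 1))) (hA2 : B * 2 ^ N * R2 ≤ (A / R2) ^ (p - 1)) :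
    ∀ x ∈ Icc r R2, flux p N u x < 0 := by
  obtain ⟨n, rfl⟩ : ∃ n, N = n + 1 := ⟨N - 1, by omega⟩
  have hr0 : 0 < r := hR1.trans_lt hr.1
  have hR2 : 0 < R2 := hr0.trans_le hr.2
  set c : ℝ := (2 ^ (n + 1) : ℝ)⁻¹ ^ (1 / (p - 1)) with hc
  have hc0 : 0 < c := by positivity
  have hA0 : 0 < A := by
    by_contra! h
    nlinarith
  set K := -deriv u r with hK
  have hK0 : 0 < K := by linarith
  have hfluxr : flux p (n + 1) u r = -(r ^ n * K ^ (p - 1)) := by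
    rw [flux, phip_of_neg hfr]; simp [hK]
  have hKp : B * 2 ^ (n + 1) * r ≤ K ^ (p - 1) := by
    have h1 : A / R2 ≤ K := by
      rw [div_le_iff₀ hR2]
      exact hA.trans (mul_le_mul_of_nonneg_left hr.2 hK0.le)
    have h2 : (A / R2) ^ (p - 1) ≤ K ^ (p - 1) :=
      Real.rpow_le_rpow (by positivity) h1 (by linarith)
    have h3 : B * 2 ^ (n + 1) * r ≤ B * 2 ^ (n + 1) * R2 :=
      mul_le_mul_of_nonneg_left hr.2 (by positivity)
    linarith
  have hhalf : ∀ x ∈ Icc r R2, x ≤ 2 * r → flux p (n + 1) u x ≤ -(r ^ n * K ^ (p - 1) / 2) := by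
    intro x hx hx2
    have h1 := S.flux_le_add hR1 hB0 hB hr.1.le hx.1 hx.2
    have hx0 : 0 < x := hr0.trans_le hx.1
    have h2 : B * x ^ (n + 1 - 1) * (x - r) ≤ B * (2 * r) ^ n * r := by
      have : 0 ≤ x - r := by linarith [hx.1]
      simp only [Nat.add_sub_cancel]
      gcongr
      linarith
    have h3 : B * (2 * r) ^ n * r ≤ r ^ n * K ^ (p - 1) / 2 := by
      have := mul_le_mul_of_nonneg_left hKp (pow_nonneg hr0.le n)
      rw [mul_pow]
      rw [pow_succ] at this
      linarith
    rw [hfluxr] at h1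
    linarith
  have hhalf_neg : ∀ x ∈ Icc r R2, x ≤ 2 * r → flux p (n + 1) u x < 0 := fun x hx hx2 => by
    have := hhalf x hx hx2
    have : 0 < r ^ n * K ^ (p - 1) := by positivity
    linarith
  rcases le_total R2 (2 * r) with h | h
  · exact fun x hx => hhalf_neg x hx (hx.2.trans h)
  · have hder : ∀ x ∈ Ioo r (2 * r), deriv u x ≤ -(K * c) := by
      intro x hx
      have hxR : x ∈ Icc r R2 := ⟨hx.1.le, hx.2.le.trans h⟩
      have hx0 : 0 < x := hr0.trans hx.1
      have h1 := hhalf x hxR hx.2.le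
      have hn := (flux_neg_iff hx0).1 (hhalf_neg x hxR hx.2.le)
      rw [flux, phip_of_neg hn, Nat.add_sub_cancel] at h1
      have h2 : x ^ n * (-deriv u x) ^ (p - 1) ≤ (2 * r) ^ n * (-deriv u x) ^ (p - 1) := by
        have : 0 ≤ -deriv u x := by linarith
        gcongr
        exact hx.2.le
      have h3 : r ^ n * (K ^ (p - 1) * (2 ^ (n + 1) : ℝ)⁻¹) ≤ r ^ n * (-deriv u x) ^ (p - 1) := by
        rw [mul_pow] at h2
        have : r ^ n * K ^ (p - 1) / 2 ≤ 2 ^ n * (r ^ n * (-deriv u x) ^ (p - 1)) := by linarith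
        calc r ^ n * (K ^ (p - 1) * (2 ^ (n + 1) : ℝ)⁻¹)
            = (r ^ n * K ^ (p - 1) / 2) / 2 ^ n := by rw [pow_succ]; field_simp
          _ ≤ _ := by rw [div_le_iff₀ (by positivity)]; linarith
      have h4 := le_of_mul_le_mul_left h3 (pow_pos hr0 n)
      have h5 : (K * c) ^ (p - 1) = K ^ (p - 1) * (2 ^ (n + 1) : ℝ)⁻¹ := by
        rw [Real.mul_rpow hK0.le hc0.le, hc, ← Real.rpow_mul (by positivity),
          one_div_mul_cancel (by linarith), Real.rpow_one]
      rw [← h5] at h4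
      have := (Real.rpow_le_rpow_iff (by positivity) (by linarith) (by linarith)).1 h4
      linarith
    obtain ⟨y, hy, hys⟩ := S.exists_deriv_eq_slope hr.1.le (by linarith : r < 2 * r) h
    have h1 := hder y hy
    rw [hys, hur, div_le_iff₀ (by linarith)] at h1
    have h2 : u (2 * r) ≤ 0 := by
      have : A * c ≤ K * r * c := mul_le_mul_of_nonneg_right hA hc0.le
      linarith
    have h2r : 2 * r ∈ Icc r R2 := ⟨by linarith, h⟩
    intro x hx
    rcases le_total x (2 * r) with h' | h'
    · exact hhalf_neg x hx h'
    · exact S.flux_neg_of_nonpos hR1 hneg ⟨by linarith [hr.1], h⟩ h2 (hhalf_neg _ h2r le_rfl)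
        x ⟨h', hx.2⟩

end CauchySol

namespace CauchySol

variable {p : ℝ} {N : ℕ} {R1 R2 d : ℝ} {g u : ℝ → ℝ}

/-- If the solution drops from `u r₀` to `1` at the radius `r`, the flux at `r` is large. -/
lemma flux_le_of_drop (S : CauchySol p N R1 R2 g u d) (hp : 1 < p) (hR1 : 0 ≤ R1)
    (hpos : ∀ s, 1 < s → 0 < g s) {r r₀ : ℝ} (hr : r ≤ R2) (hur : u r = 1)
    (hlt : ∀ x ∈ Ico R1 r, 1 < u x) (hr₀ : r₀ ∈ Ico R1 r) :
    flux p N u r ≤ -(r₀ ^ (N - 1) * ((u r₀ - 1) / R2) ^ (p - 1)) := by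
  obtain ⟨y, hy, hys⟩ := S.exists_deriv_eq_slope hr₀.1 hr₀.2 hr
  have hr0 : 0 ≤ r₀ := hR1.trans hr₀.1
  have hy1 : y ∈ Icc R1 r := ⟨hr₀.1.trans hy.1.le, hy.2.le⟩
  have h1 : flux p N u r ≤ flux p N u y :=
    (S.strictAntiOn_flux hR1 hpos hr hlt).antitoneOn hy1 ⟨hr₀.1.trans hr₀.2.le, le_rfl⟩ hy.2.le
  have hu0 := hlt r₀ hr₀
  have hs : 0 < r - r₀ := by linarith [hr₀.2]
  have hneg : deriv u y < 0 := by
    rw [hys, hur]; exact div_neg_of_neg_of_pos (by linarith) hs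
  have hR : 0 < R2 := by linarith
  have h2 : (u r₀ - 1) / R2 ≤ -deriv u y := by
    rw [hys, hur, ← neg_div, neg_sub]
    exact div_le_div_of_nonneg_left (by linarith) hs (by linarith)
  have hy2 : flux p N u y = -(y ^ (N - 1) * (-deriv u y) ^ (p - 1)) := by
    rw [flux, phip_of_neg hneg, mul_neg]
  have h3 : 0 ≤ (u r₀ - 1) / R2 := div_nonneg (by linarith) hR.le
  have h4 : r₀ ^ (N - 1) * ((u r₀ - 1) / R2) ^ (p - 1) ≤ y ^ (N - 1) * (-deriv u y) ^ (p - 1) := by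
    have := hy.1.le
    have : 0 ≤ y := by linarith
    have := hp.le
    gcongr
  linarith

/-- On a ball, the drop of the solution is controlled by the size of the nonlinearity. -/
lemma rpow_drop_le (S : CauchySol p N 0 R2 g u d) (hp : 1 < p)
    (hpos : ∀ s, 1 < s → 0 < g s) {Φ r₀ : ℝ} (hr₀ : r₀ ∈ Ioc 0 R2)
    (hlt : ∀ x ∈ Ico 0 r₀, 1 < u x) (hΦ : ∀ s, 1 < s → s ≤ d → g s ≤ Φ) :
    (d - u r₀) ^ (p - 1) ≤ Φ * r₀ ^ p := by
  have hanti := (S.strictAntiOn le_rfl hpos hr₀.2 hlt).antitoneOn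
  have hud : u 0 = d := S.2.2.1
  obtain ⟨y, hy, hys⟩ := S.exists_deriv_eq_slope le_rfl hr₀.1 hr₀.2
  have hy0 := hy.1
  have hd : 1 < d := hud ▸ hlt 0 ⟨le_rfl, hr₀.1⟩
  have hΦ0 : 0 < Φ := (hpos d hd).trans_le (hΦ d hd le_rfl)
  have hneg : deriv u y < 0 :=
    (flux_neg_iff hy0).1 (S.flux_neg le_rfl hpos hr₀.2 hlt ⟨hy0, hy.2.le⟩)
  have h1 := S.le_flux_sub (x := 0) (y := y) (C := -(y ^ (N - 1) * Φ)) le_rfl hy0.le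
    (hy.2.le.trans hr₀.2) fun t ht => by
      have ht1 := hlt t ⟨ht.1.le, ht.2.trans hy.2⟩
      have ht2 : u t ≤ d := hud ▸ hanti ⟨le_rfl, hr₀.1.le⟩ ⟨ht.1.le, (ht.2.trans hy.2).le⟩ ht.1.le
      have ht0 := ht.1.le
      have h3 : t ^ (N - 1) * g (u t) ≤ y ^ (N - 1) * Φ :=
        mul_le_mul (pow_le_pow_left₀ ht0 ht.2.le _) (hΦ _ ht1 ht2) (hpos _ ht1).le (by positivity)
      linarith
  rw [S.flux_left, flux, phip_of_neg hneg] at h1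
  have h2 : (-deriv u y) ^ (p - 1) ≤ Φ * y := by
    refine le_of_mul_le_mul_left ?_ (pow_pos hy0 (N - 1))
    linarith
  rw [hys, hud, sub_zero, ← neg_div, neg_sub,
    Real.div_rpow (sub_nonneg.2 (hud ▸ hanti ⟨le_rfl, hr₀.1.le⟩ ⟨hr₀.1.le, le_rfl⟩ hr₀.1.le))
      hr₀.1.le, div_le_iff₀ (Real.rpow_pos_of_pos hr₀.1 _)] at h2
  have h4 : r₀ ^ p = r₀ * r₀ ^ (p - 1) := by
    rw [← Real.rpow_one_add' hr₀.1.le (by linarith)]; ring_nf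
  rw [h4, ← mul_assoc]
  refine h2.trans ?_
  have := hr₀.1
  have := hy.2.le
  gcongr

end CauchySol

lemma hasDerivAt_Fint {f : ℝ → ℝ} (hf : ContinuousOn f (Ici 0)) {s : ℝ} (hs : 0 < s) :
    HasDerivAt (Fint f) (f s) s := by
  refine intervalIntegral.integral_hasDerivAt_right ?_ ?_
    (hf.continuousAt (Ici_mem_nhds hs))
  · refine (hf.mono fun x hx => ?_).intervalIntegrable
    exact (lt_min one_pos hs).le.trans hx.1
  · exact (hf.mono Ioi_subset_Ici_self).stronglyMeasurableAtFilter isOpen_Ioi s hs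

lemma Fint_one (f : ℝ → ℝ) : Fint f 1 = 0 := by simp [Fint]

lemma strictMonoOn_Fint {f : ℝ → ℝ} (hf : ContinuousOn f (Ici 0)) (hpos : ∀ s, 1 < s → 0 < f s) :
    StrictMonoOn (Fint f) (Ici 1) := by
  refine strictMonoOn_of_deriv_pos (convex_Ici 1) (fun x hx =>
    (hasDerivAt_Fint hf (one_pos.trans_le hx)).continuousAt.continuousWithinAt) fun x hx => ?_
  rw [interior_Ici] at hx
  rw [(hasDerivAt_Fint hf (one_pos.trans hx)).deriv]
  exact hpos x hx

lemma Fint_pos {f : ℝ → ℝ} (hf : ContinuousOn f (Ici 0)) (hpos : ∀ s, 1 < s → 0 < f s) {s : ℝ}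
    (hs : 1 < s) : 0 < Fint f s := by
  rw [← Fint_one f]
  exact strictMonoOn_Fint hf hpos self_mem_Ici hs.le hs

lemma le_fstar {f : ℝ → ℝ} (hf : ContinuousOn f (Ici 0)) {σ s : ℝ} (hσ : 1 ≤ σ) (hs : σ ≤ s) :
    f σ ≤ fstar f s :=
  le_csSup (isCompact_Icc.bddAbove_image
    (hf.mono fun _ hx => zero_le_one.trans hx.1)) ⟨σ, ⟨hσ, hs⟩, rfl⟩

/-- The Pohozaev-type functional associated with a radial function. -/
noncomputable def pohozaev (p : ℝ) (n : ℕ) (f u : ℝ → ℝ) (α x : ℝ) : ℝ :=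
  x ^ (n + 1) * ((p - 1) / p * |deriv u x| ^ p + Fint f (u x)) + α * flux p (n + 1) u x * u x

lemma fhat_of_nonneg {f : ℝ → ℝ} {s : ℝ} (hs : 0 ≤ s) : fhat f s = f s := by simp [fhat, hs]

namespace CauchySol

variable {p : ℝ} {n : ℕ} {R2 d : ℝ} {f u : ℝ → ℝ}

lemma hasDerivAt_pohozaev (S : CauchySol p (n + 1) 0 R2 (fhat f) u d) (hp : 1 < p)
    (hf : ContinuousOn f (Ici 0)) {x : ℝ} (hx : x ∈ Ioo 0 R2) (hux : 0 < u x)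
    (hneg : deriv u x < 0) (α : ℝ) :
    HasDerivAt (pohozaev p n f u α)
      (x ^ n * ((n + 1) * Fint f (u x) - α * (f (u x) * u x) +
        (α + 1 - (n + 1) / p) * |deriv u x| ^ p)) x := by
  have hx0 := hx.1
  have hV := S.hasDerivAt_flux ⟨hx.1, hx.2.le⟩
  rw [fhat_of_nonneg hux.le, Nat.add_sub_cancel] at hV
  have hu : HasDerivAt u (deriv u x) x := (S.1 x ⟨hx.1.le, hx.2.le⟩).hasDerivAt
  have hF := (hasDerivAt_Fint hf hux).comp x hu
  have hpow : HasDerivAt (fun t : ℝ => t ^ n) (n * x ^ (n - 1)) x := hasDerivAt_pow n x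
  have hm := hV.neg.div hpow (pow_pos hx0 n).ne'
  have hfneg : flux p (n + 1) u x < 0 := (flux_neg_iff hx0).2 hneg
  have key : ∀ t, 0 < t → flux p (n + 1) u t < 0 →
      |deriv u t| ^ p = ((-flux p (n + 1) u t) / t ^ n) ^ (p / (p - 1)) := by
    intro t ht htn
    have hn := (flux_neg_iff ht).1 htn
    have h0 : 0 < -deriv u t := by linarith
    have h1 : (-flux p (n + 1) u t) / t ^ n = (-deriv u t) ^ (p - 1) := by
      rw [flux, phip_of_neg hn, Nat.add_sub_cancel]
      field_simp
    rw [h1, ← Real.rpow_mul h0.le, mul_div_cancel₀ _ (by linarith), abs_of_neg hn]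
  have hU : HasDerivAt (fun t => |deriv u t| ^ p)
      (p / (p - 1) * (-deriv u x * f (u x) - n / x * |deriv u x| ^ p)) x := by
    have h2 := hm.rpow_const (p := p / (p - 1)) (Or.inr (by rw [le_div_iff₀] <;> linarith))
    have h0 : 0 < -deriv u x := by linarith
    have h1 : (-flux p (n + 1) u x) / x ^ n = (-deriv u x) ^ (p - 1) := by
      rw [flux, phip_of_neg hneg, Nat.add_sub_cancel]
      field_simp
    have h3 : -flux p (n + 1) u x = (-deriv u x) ^ (p - 1) * x ^ n := by
      rw [← h1]; field_simp
    have h4 : ((-deriv u x) ^ (p - 1)) ^ (p / (p - 1) - 1) = -deriv u x := by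
      rw [← Real.rpow_mul h0.le, mul_sub, mul_div_cancel₀ _ (by linarith)]
      ring_nf
      exact Real.rpow_one _
    have h5 : (-deriv u x) ^ p = (-deriv u x) ^ (p - 1) * -deriv u x := by
      rw [← Real.rpow_add_one h0.ne']; ring_nf
    refine (h2.congr_of_eventuallyEq ?_).congr_deriv ?_
    · have hc := hV.continuousAt.eventually_lt_const hfneg
      filter_upwards [hc, lt_mem_nhds hx0] with t ht1 ht2 using key t ht2 ht1
    · simp only [Pi.neg_apply, Pi.div_apply]
      rw [h1, h4, abs_of_neg hneg, h5, h3]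
      have : (n : ℝ) * x ^ (n - 1) = n / x * x ^ n := by
        rcases n with _ | n
        · simp
        · rw [Nat.add_sub_cancel, pow_succ]; field_simp
      rw [this]
      field_simp
      ring
  have hpow1 : HasDerivAt (fun t : ℝ => t ^ (n + 1)) ((n + 1 : ℝ) * x ^ n) x := by
    simpa using hasDerivAt_pow (n + 1) x
  have htot := (hpow1.mul ((hU.const_mul ((p - 1) / p)).add hF)).add ((hV.const_mul α).mul hu)
  refine htot.congr_deriv ?_
  have hfl : flux p (n + 1) u x * deriv u x = x ^ n * |deriv u x| ^ p := by
    have h0 : 0 < -deriv u x := by linarith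
    have h5 : (-deriv u x) ^ p = (-deriv u x) ^ (p - 1) * -deriv u x := by
      rw [← Real.rpow_add_one h0.ne']; ring_nf
    rw [flux, phip_of_neg hneg, Nat.add_sub_cancel, abs_of_neg hneg, h5]
    ring
  rw [mul_assoc α (flux p (n + 1) u x), hfl]
  simp only [Function.comp_apply, Pi.add_apply]
  rw [pow_succ]
  have : p - 1 ≠ 0 := by linarith
  have : p ≠ 0 := by linarith
  field_simp
  ring

lemma continuousOn_pohozaev (S : CauchySol p (n + 1) 0 R2 (fhat f) u d) (hp : 1 < p)
    (hf : ContinuousOn f (Ici 0)) {r : ℝ} (hr : r ≤ R2) (hu : ∀ x ∈ Icc 0 r, 0 < u x) (α : ℝ) :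
    ContinuousOn (pohozaev p n f u α) (Icc 0 r) := by
  have hsub : Icc 0 r ⊆ Icc 0 R2 := Icc_subset_Icc le_rfl hr
  have h1 := S.continuousOn.mono hsub
  have h2 := S.continuousOn_flux.mono hsub
  have h3 : ContinuousOn (fun x => |deriv u x| ^ p) (Icc 0 r) :=
    (S.2.1.mono hsub).abs.rpow_const fun x _ => Or.inr (by linarith)
  have h4 : ContinuousOn (fun x => Fint f (u x)) (Icc 0 r) := fun x hx =>
    (hasDerivAt_Fint hf (hu x hx)).continuousAt.comp_continuousWithinAt (h1 x hx)
  unfold pohozaev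
  fun_prop

end CauchySol

lemma pow_sub_pow_le_of_hasDerivAt {P D : ℝ → ℝ} {a b c : ℝ} {n : ℕ} (hab : a ≤ b)
    (hP : ContinuousOn P (Icc a b)) (hD : ∀ x ∈ Ioo a b, HasDerivAt P (D x) x)
    (hc : ∀ x ∈ Ioo a b, c * x ^ n ≤ D x) :
    c / (n + 1) * (b ^ (n + 1) - a ^ (n + 1)) ≤ P b - P a := by
  have hpow : ∀ x : ℝ, HasDerivAt (fun t : ℝ => c / (n + 1) * t ^ (n + 1)) (c * x ^ n) x := by
    intro x
    have := (hasDerivAt_pow (n + 1) x).const_mul (c / (n + 1))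
    refine this.congr_deriv ?_
    push_cast
    field_simp
  have hm : MonotoneOn (fun x => P x - c / (n + 1) * x ^ (n + 1)) (Icc a b) := by
    have hd : ∀ x ∈ Ioo a b, HasDerivAt (fun x => P x - c / (n + 1) * x ^ (n + 1))
        (D x - c * x ^ n) x := fun x hx => (hD x hx).sub (hpow x)
    refine monotoneOn_of_deriv_nonneg (convex_Icc a b) (hP.sub (by fun_prop)) ?_ ?_
    all_goals rw [interior_Icc]
    · exact fun x hx => (hd x hx).differentiableAt.differentiableWithinAt
    · intro x hx
      rw [(hd x hx).deriv]
      linarith [hc x hx]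
  have := hm ⟨le_rfl, hab⟩ ⟨hab, le_rfl⟩ hab
  simp only at this
  linarith

lemma CauchySol.exists_eq {p : ℝ} {N : ℕ} {R1 R2 d : ℝ} {g u : ℝ → ℝ}
    (S : CauchySol p N R1 R2 g u d) {r e : ℝ} (hr : r ∈ Ioc R1 R2) (hur : u r = 1) (he : 1 < e)
    (hed : e < d) : ∃ r₀ ∈ Ioo R1 r, u r₀ = e := by
  have hud : u R1 = d := S.2.2.1
  obtain ⟨r₀, hr₀, h⟩ := intermediate_value_Ioo' hr.1.le
    (S.continuousOn.mono (Icc_subset_Icc le_rfl hr.2)) (show e ∈ Ioo (u r) (u R1) by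
      rw [hur, hud]; exact ⟨he, hed⟩)
  exact ⟨r₀, hr₀, h⟩

lemma CauchySol.pohozaev_bound {p : ℝ} {n : ℕ} {R2 d : ℝ} {f u : ℝ → ℝ}
    (S : CauchySol p (n + 1) 0 R2 (fhat f) u d) (hp : 1 < p) (hf : ContinuousOn f (Ici 0))
    (hpos : ∀ s, 1 < s → 0 < f s) {α L η s₀ r r₀ : ℝ} (hα : 0 ≤ α) (hαL : α * L ≤ n + 1)
    (hαp : n + 1 ≤ p * (1 + α)) (hL0 : 0 < L) (hη1 : η < 1) (hs₀ : 1 < s₀) (hηs : 1 < η * s₀)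
    (hL : ∀ s, s₀ ≤ s → fstar f s * s ≤ L * Fint f (η * s)) (hd : s₀ ≤ d)
    (hr : r ∈ Ioc 0 R2) (hur : u r = 1) (hlt : ∀ x ∈ Ico 0 r, 1 < u x) (hr₀ : r₀ ∈ Ioo 0 r)
    (hur₀ : u r₀ = η * d) :
    (n + 1 - α * L) * Fint f (η * d) / (n + 1) * r₀ ^ (n + 1)
      - α * (fstar f s₀ * s₀) / (n + 1) * R2 ^ (n + 1) ≤ r ^ (n + 1) * |deriv u r| ^ p := by
  have hpos' : ∀ s, 1 < s → 0 < fhat f s := fun s hs => by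
    rw [fhat_of_nonneg (by linarith)]; exact hpos s hs
  have hud : u 0 = d := S.2.2.1
  have hη0 : 0 < η := by
    by_contra! h
    nlinarith
  have hu1 : ∀ x ∈ Icc 0 r, 1 ≤ u x := fun x hx => by
    rcases hx.2.eq_or_lt with rfl | h
    · exact hur.ge
    · exact (hlt x ⟨hx.1, h⟩).le
  have hcont := S.continuousOn_pohozaev hp hf hr.2
    (fun x hx => one_pos.trans_le (hu1 x hx)) α
  have hder : ∀ x ∈ Ioo 0 r, HasDerivAt (pohozaev p n f u α) _ x := fun x hx =>
    S.hasDerivAt_pohozaev hp hf ⟨hx.1, hx.2.trans_le hr.2⟩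
      (one_pos.trans (hlt x ⟨hx.1.le, hx.2⟩))
      ((flux_neg_iff hx.1).1 (S.flux_neg le_rfl hpos' hr.2 hlt ⟨hx.1, hx.2.le⟩)) α
  have hanti := (S.strictAntiOn le_rfl hpos' hr.2 hlt).antitoneOn
  have hcoef : 0 ≤ α + 1 - (n + 1) / p := by
    rw [sub_nonneg, div_le_iff₀ (by linarith)]
    linarith
  have hmono := (strictMonoOn_Fint hf hpos).monotoneOn
  have h1 := pow_sub_pow_le_of_hasDerivAt (c := (n + 1 - α * L) * Fint f (η * d)) (n := n)
    hr₀.1.le (hcont.mono (Icc_subset_Icc le_rfl hr₀.2.le))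
    (fun x hx => hder x ⟨hx.1, hx.2.trans hr₀.2⟩) fun x hx => by
      have hx0 := hx.1
      have hxr : x ∈ Icc 0 r := ⟨hx.1.le, (hx.2.trans hr₀.2).le⟩
      have hux1 : η * d ≤ u x := hur₀ ▸ hanti hxr ⟨hr₀.1.le, hr₀.2.le⟩ hx.2.le
      have hux2 : u x ≤ d := hud ▸ hanti ⟨le_rfl, hr.1.le⟩ hxr hx.1.le
      have hηd : 1 < η * d := hηs.trans_le (mul_le_mul_of_nonneg_left hd hη0.le)
      have hux : 1 < u x := hηd.trans_le hux1
      have hF : Fint f (η * d) ≤ Fint f (u x) := hmono hηd.le hux.le hux1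
      have hfs : f (u x) * u x ≤ fstar f d * d := by
        have h0 := hpos _ hux
        have h2 := le_fstar hf hux.le hux2
        exact mul_le_mul h2 hux2 (by linarith) (by linarith)
      have h3 := mul_le_mul_of_nonneg_left (hfs.trans (hL d hd)) hα
      have h4 : 0 ≤ (α + 1 - (n + 1) / p) * |deriv u x| ^ p := by positivity
      rw [mul_comm]
      refine mul_le_mul_of_nonneg_left ?_ (by positivity)
      nlinarith [mul_le_mul_of_nonneg_left hF (show (0 : ℝ) ≤ n + 1 by positivity)]
  have hfs₀ : 0 < fstar f s₀ := (hpos s₀ hs₀).trans_le (le_fstar hf hs₀.le le_rfl)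
  have hC : 0 ≤ α * (fstar f s₀ * s₀) := by positivity
  have h2 := pow_sub_pow_le_of_hasDerivAt (c := -(α * (fstar f s₀ * s₀))) (n := n)
    hr₀.2.le (hcont.mono (Icc_subset_Icc hr₀.1.le le_rfl))
    (fun x hx => hder x ⟨hr₀.1.trans hx.1, hx.2⟩) fun x hx => by
      have hx0 := hr₀.1.trans hx.1
      have hux := hlt x ⟨hx0.le, hx.2⟩
      have h4 : 0 ≤ (α + 1 - (n + 1) / p) * |deriv u x| ^ p := by positivity
      have hF := Fint_pos hf hpos hux
      have h0 := hpos _ hux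
      rw [mul_comm]
      refine mul_le_mul_of_nonneg_left ?_ (by positivity)
      have hF' : 0 ≤ (n + 1 : ℝ) * Fint f (u x) := by positivity
      rcases le_total (u x) s₀ with h | h
      · have h5 : f (u x) * u x ≤ fstar f s₀ * s₀ :=
          mul_le_mul (le_fstar hf hux.le h) h (by linarith) hfs₀.le
        linarith [mul_le_mul_of_nonneg_left h5 hα]
      · have h5 : f (u x) * u x ≤ fstar f (u x) * u x :=
          mul_le_mul_of_nonneg_right (le_fstar hf hux.le le_rfl) (by linarith)
        have h6 : 1 < η * u x := hηs.trans_le (mul_le_mul_of_nonneg_left h hη0.le)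
        have h7 : Fint f (η * u x) ≤ Fint f (u x) := hmono h6.le hux.le (by nlinarith)
        have h8 : f (u x) * u x ≤ L * Fint f (u x) :=
          (h5.trans (hL _ h)).trans (mul_le_mul_of_nonneg_left h7 hL0.le)
        have h9 := mul_le_mul_of_nonneg_left h8 hα
        have h10 := mul_le_mul_of_nonneg_right hαL hF.le
        linarith
  have hP0 : pohozaev p n f u α 0 = 0 := by simp [pohozaev, S.flux_left]
  have hrneg := S.flux_neg le_rfl hpos' hr.2 hlt ⟨hr.1, le_rfl⟩
  have hPr : pohozaev p n f u α r ≤ r ^ (n + 1) * |deriv u r| ^ p := by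
    rw [pohozaev, hur, Fint_one]
    have : (p - 1) / p * |deriv u r| ^ p ≤ |deriv u r| ^ p := by
      refine mul_le_of_le_one_left (by positivity) ?_
      rw [div_le_one (by linarith)]
      linarith
    have h5 := mul_le_mul_of_nonneg_left this (pow_nonneg hr.1.le (n + 1))
    have h6 := mul_nonneg hα (neg_nonneg.2 hrneg.le)
    linarith
  have h3 : α * (fstar f s₀ * s₀) / (n + 1) * (r ^ (n + 1) - r₀ ^ (n + 1)) ≤
      α * (fstar f s₀ * s₀) / (n + 1) * R2 ^ (n + 1) := by
    refine mul_le_mul_of_nonneg_left ?_ (by positivity)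
    have h5 : r ^ (n + 1) ≤ R2 ^ (n + 1) := pow_le_pow_left₀ hr.1.le hr.2 _
    have h6 : 0 ≤ r₀ ^ (n + 1) := pow_nonneg hr₀.1.le _
    linarith
  rw [zero_pow (by omega), sub_zero, hP0, sub_zero] at h1
  rw [neg_div, neg_mul] at h2
  linarith

lemma fstar_growth {f : ℝ → ℝ} (hf : ContinuousOn f (Ici 0))
    (hpos : ∀ s, 1 < s → 0 < f s) {L η s₀ : ℝ} (hL0 : 0 < L) (hη1 : η < 1)
    (hs₀ : 1 < s₀) (hηs : 1 < η * s₀)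
    (hL : ∀ s, s₀ ≤ s → fstar f s * s ≤ L * Fint f (η * s)) :
    ∃ C > 0, ∀ s, s₀ ≤ s → fstar f s ≤ C * s ^ (L - 1) := by
  have hη0 : 0 < η := by
    by_contra! h
    nlinarith
  have hmain : ∀ s, s₀ ≤ s → fstar f s * s ≤ L * Fint f s := fun s hs => by
    have h6 : 1 < η * s := hηs.trans_le (mul_le_mul_of_nonneg_left hs hη0.le)
    have h7 : Fint f (η * s) ≤ Fint f s :=
      (strictMonoOn_Fint hf hpos).monotoneOn h6.le (hs₀.le.trans hs) (by nlinarith)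
    exact (hL s hs).trans (mul_le_mul_of_nonneg_left h7 hL0.le)
  have hd : ∀ s, s₀ ≤ s → HasDerivAt (fun t => Fint f t * t ^ (-L))
      (f s * s ^ (-L) + Fint f s * (-L * s ^ (-L - 1))) s := fun s hs => by
    have hs0 : 0 < s := by linarith
    exact (hasDerivAt_Fint hf hs0).mul (Real.hasDerivAt_rpow_const (Or.inl hs0.ne'))
  have hanti : AntitoneOn (fun t => Fint f t * t ^ (-L)) (Ici s₀) := by
    refine antitoneOn_of_deriv_nonpos (convex_Ici s₀)
      (fun s hs => (hd s hs).continuousAt.continuousWithinAt) ?_ ?_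
    all_goals rw [interior_Ici]
    · exact fun s hs => (hd s (le_of_lt hs)).differentiableAt.differentiableWithinAt
    · intro s hs
      have hs' : s₀ ≤ s := le_of_lt hs
      have hs0 : 0 < s := by linarith
      rw [(hd s hs').deriv]
      have h1 : s ^ (-L) = s * s ^ (-L - 1) := by
        rw [← Real.rpow_one_add' hs0.le (by linarith)]; ring_nf
      have h2 : 0 < s ^ (-L - 1) := Real.rpow_pos_of_pos hs0 _
      have h3 : f s * s ≤ L * Fint f s :=
        (mul_le_mul_of_nonneg_right (le_fstar hf (by linarith) le_rfl) hs0.le).trans (hmain s hs')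
      rw [h1]
      nlinarith [mul_le_mul_of_nonneg_right h3 h2.le]
  have hF0 := Fint_pos hf hpos hs₀
  refine ⟨L * (Fint f s₀ * s₀ ^ (-L)), by positivity, fun s hs => ?_⟩
  have hs0 : 0 < s := by linarith
  have h1 : Fint f s * s ^ (-L) ≤ Fint f s₀ * s₀ ^ (-L) := hanti self_mem_Ici hs hs
  have h2 : Fint f s ≤ Fint f s₀ * s₀ ^ (-L) * s ^ L := by
    rw [Real.rpow_neg hs0.le, ← div_eq_mul_inv, div_le_iff₀ (by positivity)] at h1
    exact h1
  have h3 := (hmain s hs).trans (mul_le_mul_of_nonneg_left h2 hL0.le)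
  have h4 : s ^ L = s ^ (L - 1) * s := by
    rw [← Real.rpow_add_one hs0.ne']; ring_nf
  rw [h4] at h3
  refine le_of_mul_le_mul_right ?_ hs0
  linarith

lemma exists_rpow_le {p α L C η R2 : ℝ} {n : ℕ} (hα : 0 ≤ α)
    (hαp : n + 1 ≤ p * (1 + α)) (hC : 0 < C) (hη1 : η < 1) (hR2 : 0 < R2) :
    ∃ c > 0, ∀ d r Φ : ℝ, 0 < d → 0 < r → r ≤ R2 → 0 < Φ → Φ ≤ C * d ^ (L - 1) →
      ((1 - η) * d) ^ (p - 1) ≤ Φ * r ^ p →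
      c * d ^ (p * (1 + α) - α * L) ≤ r ^ (n + 1) * (Φ * d) := by
  have hη : 0 < 1 - η := by linarith
  refine ⟨R2 ^ ((n + 1 : ℝ) - p * (1 + α)) * (((1 - η) ^ (p - 1)) ^ (1 + α) * C ^ (-α)),
    by positivity, fun d r Φ hd hr hrR hΦ hΦC hdrop => ?_⟩
  have h1 : (((1 - η) * d) ^ (p - 1)) ^ (1 + α) ≤ (Φ * r ^ p) ^ (1 + α) :=
    Real.rpow_le_rpow (by positivity) hdrop (by linarith)
  have h2 : (C * d ^ (L - 1)) ^ (-α) ≤ Φ ^ (-α) :=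
    Real.rpow_le_rpow_of_nonpos hΦ hΦC (by linarith)
  have h3 : R2 ^ ((n + 1 : ℝ) - p * (1 + α)) ≤ r ^ ((n + 1 : ℝ) - p * (1 + α)) :=
    Real.rpow_le_rpow_of_nonpos hr hrR (by linarith)
  calc R2 ^ ((n + 1 : ℝ) - p * (1 + α)) * (((1 - η) ^ (p - 1)) ^ (1 + α) * C ^ (-α)) *
        d ^ (p * (1 + α) - α * L)
      = R2 ^ ((n + 1 : ℝ) - p * (1 + α)) *
        ((((1 - η) * d) ^ (p - 1)) ^ (1 + α) * (C * d ^ (L - 1)) ^ (-α) * d) := by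
        have : d ^ (p * (1 + α) - α * L) =
            (d ^ (p - 1)) ^ (1 + α) * (d ^ (L - 1)) ^ (-α) * d := by
          rw [← Real.rpow_mul hd.le, ← Real.rpow_mul hd.le, ← Real.rpow_add hd,
            ← Real.rpow_add_one hd.ne']
          ring_nf
        rw [this, Real.mul_rpow hη.le hd.le, Real.mul_rpow (by positivity) (by positivity),
          Real.mul_rpow (by positivity) (by positivity)]
        ring
    _ ≤ r ^ ((n + 1 : ℝ) - p * (1 + α)) * ((Φ * r ^ p) ^ (1 + α) * Φ ^ (-α) * d) := by
        gcongr
    _ = r ^ (n + 1) * (Φ * d) := by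
        have e1 : Φ = Φ ^ (1 + α) * Φ ^ (-α) := by
          rw [← Real.rpow_add hΦ]; simp
        have e2 : r ^ (n + 1) = r ^ ((n + 1 : ℝ) - p * (1 + α)) * (r ^ p) ^ (1 + α) := by
          rw [← Real.rpow_mul hr.le, ← Real.rpow_add hr, ← Real.rpow_natCast]
          push_cast
          ring_nf
        rw [Real.mul_rpow hΦ.le (by positivity), e2]
        nth_rewrite 3 [e1]
        ring

lemma exists_neg_le_fhat {f : ℝ → ℝ} (hf : ContinuousOn f (Ici 0))
    (hpos : ∀ s, 1 < s → 0 < f s) : ∃ B : ℝ, 0 ≤ B ∧ ∀ s, -B ≤ fhat f s := by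
  obtain ⟨m, hm⟩ := isCompact_Icc.bddBelow_image 
    (hf.mono (Icc_subset_Ici_self : Icc (0 : ℝ) 1 ⊆ Ici 0))
  refine ⟨|m|, abs_nonneg m, fun s => ?_⟩
  have hm' := neg_abs_le m
  rw [fhat]
  split_ifs with hs
  · rcases le_or_gt s 1 with h | h
    · exact hm'.trans (hm ⟨s, ⟨hs, h⟩, rfl⟩)
    · linarith [hpos s h, abs_nonneg m]
  · linarith [abs_nonneg m]

/-- For all large initial data, the flux stays negative once the solution has reached `1`. -/
def FluxNegAfterHit (p : ℝ) (N : ℕ) (R1 R2 : ℝ) (g : ℝ → ℝ) : Prop :=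
  ∀ᶠ d in atTop, ∀ u : ℝ → ℝ, CauchySol p N R1 R2 g u d →
    ∀ r ∈ Ioc R1 R2, u r = 1 → (∀ x ∈ Ico R1 r, 1 < u x) → ∀ x ∈ Icc r R2, flux p N u x < 0

section

variable {p B R1 R2 : ℝ} {N : ℕ} {g : ℝ → ℝ}

lemma fluxNegAfterHit_of_drop (hp : 1 < p) (hR1 : 0 ≤ R1) (hR12 : R1 < R2)
    (hpos : ∀ s, 1 < s → 0 < g s) (hB0 : 0 ≤ B) (hB : ∀ s, -B ≤ g s)
    {ρ e : ℝ} (hρ : 0 < ρ) (he : 0 < e)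
    (H : ∀ᶠ d in atTop, ∀ u : ℝ → ℝ, CauchySol p N R1 R2 g u d → ∀ r ∈ Ioc R1 R2, u r = 1 →
      (∀ x ∈ Ico R1 r, 1 < u x) → ∃ r₀ ∈ Ico R1 r, ρ ≤ r₀ ∧ u r₀ = e * d) :
    FluxNegAfterHit p N R1 R2 g := by
  have hR2 : 0 < R2 := hR1.trans_lt hR12
  have ht : Tendsto (fun d : ℝ => ρ ^ (N - 1) * ((e * d - 1) / R2) ^ (p - 1)) atTop atTop := by
    refine Tendsto.const_mul_atTop (by positivity)
      ((tendsto_rpow_atTop (by linarith)).comp (Tendsto.atTop_div_const hR2 ?_))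
    exact tendsto_atTop_add_const_right _ _ (tendsto_id.const_mul_atTop he)
  filter_upwards [H, ht.eventually_gt_atTop (B * R2 ^ (N - 1) * R2), eventually_gt_atTop (1 / e)]
    with d hd1 hd2 hd3 u S r hr hur hlt
  obtain ⟨r₀, hr₀, hρr, hur₀⟩ := hd1 u S r hr hur hlt
  have h1 := S.flux_le_of_drop hp hR1 hpos hr.2 hur hlt hr₀
  refine S.flux_neg_of_lt hR1 hB0 hB hr ?_
  rw [hur₀] at h1
  have h0 : 0 ≤ (e * d - 1) / R2 := by
    rw [div_lt_iff₀ he] at hd3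
    exact div_nonneg (by linarith) hR2.le
  have h2 : ρ ^ (N - 1) * ((e * d - 1) / R2) ^ (p - 1) ≤
      r₀ ^ (N - 1) * ((e * d - 1) / R2) ^ (p - 1) := by gcongr
  linarith

lemma fluxNegAfterHit_of_annulus (hp : 1 < p) (hR1 : 0 < R1) (hR12 : R1 < R2)
    (hpos : ∀ s, 1 < s → 0 < g s) (hB0 : 0 ≤ B) (hB : ∀ s, -B ≤ g s) :
    FluxNegAfterHit p N R1 R2 g :=
  fluxNegAfterHit_of_drop hp hR1.le hR12 hpos hB0 hB hR1 one_pos <|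
    Eventually.of_forall fun d u S r hr _ _ =>
      ⟨R1, ⟨le_rfl, hr.1⟩, le_rfl, by rw [S.2.2.1, one_mul]⟩

lemma fluxNegAfterHit_of_rpow_bound (hp : 1 < p) (hR2 : 0 < R2)
    (hpos : ∀ s, 1 < s → 0 < g s) (hB0 : 0 ≤ B) (hB : ∀ s, -B ≤ g s) {M : ℝ} (hM : 0 < M)
    (hg : ∀ d s, 1 < s → s ≤ d → g s ≤ M * d ^ (p - 1)) :
    FluxNegAfterHit p N 0 R2 g := by
  have hp0 : 0 < p := by linarith
  have hκ : 0 < (1 / 2 : ℝ) ^ (p - 1) / M := by positivity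
  refine fluxNegAfterHit_of_drop (e := 1 / 2) hp le_rfl hR2 hpos hB0 hB
    (Real.rpow_pos_of_pos hκ (1 / p)) one_half_pos ?_
  filter_upwards [eventually_gt_atTop 2] with d hd u S r hr hur hlt
  have hd0 : 0 < d := by linarith
  obtain ⟨r₀, hr₀, hur₀⟩ := S.exists_eq (e := 1 / 2 * d) hr hur (by linarith) (by linarith)
  refine ⟨r₀, ⟨hr₀.1.le, hr₀.2⟩, ?_, hur₀⟩
  have h1 := S.rpow_drop_le hp hpos ⟨hr₀.1, hr₀.2.le.trans hr.2⟩
    (fun x hx => hlt x ⟨hx.1, hx.2.trans hr₀.2⟩) (hg d)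
  rw [hur₀, show d - 1 / 2 * d = 1 / 2 * d by ring, Real.mul_rpow (by positivity) hd0.le] at h1
  have h2 : (1 / 2 : ℝ) ^ (p - 1) / M ≤ r₀ ^ p := by
    rw [div_le_iff₀ hM]
    refine le_of_mul_le_mul_right ?_ (Real.rpow_pos_of_pos hd0 (p - 1))
    linarith
  have h3 := Real.rpow_le_rpow hκ.le h2 (by positivity : 0 ≤ 1 / p)
  rwa [← Real.rpow_mul hr₀.1.le, mul_one_div_cancel hp0.ne', Real.rpow_one] at h3

lemma fluxNegAfterHit_of_steep {n : ℕ} (hp : 1 < p) (hR2 : 0 < R2)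
    (hpos : ∀ s, 1 < s → 0 < g s) (hneg : ∀ s ≤ 0, g s = 0) (hB0 : 0 ≤ B) (hB : ∀ s, -B ≤ g s)
    {G : ℝ → ℝ} (hG : Tendsto G atTop atTop)
    (H : ∀ᶠ d in atTop, ∀ u : ℝ → ℝ, CauchySol p (n + 1) 0 R2 g u d → ∀ r ∈ Ioc 0 R2, u r = 1 →
      (∀ x ∈ Ico 0 r, 1 < u x) → G d ≤ r ^ (n + 1) * |deriv u r| ^ p) :
    FluxNegAfterHit p (n + 1) 0 R2 g := by
  have hA1 : Tendsto (fun A : ℝ => A * (2 ^ (n + 1) : ℝ)⁻¹ ^ (1 / (p - 1))) atTop atTop :=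
    tendsto_id.atTop_mul_const (by positivity)
  have hA2 : Tendsto (fun A : ℝ => (A / R2) ^ (p - 1)) atTop atTop :=
    (tendsto_rpow_atTop (by linarith)).comp (tendsto_id.atTop_div_const hR2)
  obtain ⟨A, ⟨hA1, hA2⟩, hA0⟩ := (((hA1.eventually_ge_atTop 1).and
    (hA2.eventually_ge_atTop (B * 2 ^ (n + 1) * R2))).and (eventually_gt_atTop 0)).exists
  filter_upwards [H, hG.eventually_gt_atTop (A * (B * R2 ^ n * R2))] with d hd1 hd2 u S r hr hur hlt
  have h1 := hd1 u S r hr hur hlt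
  have hfn := S.flux_neg le_rfl hpos hr.2 hlt ⟨hr.1, le_rfl⟩
  have hdn := (flux_neg_iff hr.1).1 hfn
  rcases le_or_gt A (-deriv u r * r) with hA | hA
  · exact S.flux_neg_of_steep hp (by omega) le_rfl hneg hB0 hB hr hur hdn hA hA1 hA2
  · refine S.flux_neg_of_lt le_rfl hB0 hB hr ?_
    rw [Nat.add_sub_cancel]
    have h0 : 0 < -deriv u r := by linarith
    have h5 : |deriv u r| ^ p = (-deriv u r) ^ (p - 1) * -deriv u r := by
      rw [abs_of_neg hdn, ← Real.rpow_add_one h0.ne']; ring_nf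
    have h6 : r ^ (n + 1) * |deriv u r| ^ p = (-deriv u r * r) * -flux p (n + 1) u r := by
      rw [h5, flux, phip_of_neg hdn, Nat.add_sub_cancel]; ring
    have h7 : (-deriv u r * r) * -flux p (n + 1) u r ≤ A * -flux p (n + 1) u r :=
      mul_le_mul_of_nonneg_right hA.le (by linarith)
    have h8 := lt_of_mul_lt_mul_left (hd2.trans_le ((h1.trans_eq h6).trans h7)) hA0.le
    linarith

end

lemma fluxNegAfterHit_of_subl {p B R2 : ℝ} {N : ℕ} {f : ℝ → ℝ} (hp : 1 < p) (hR2 : 0 < R2)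
    (hf : ContinuousOn f (Ici 0)) (hpos : ∀ s, 1 < s → 0 < f s) (hB0 : 0 ≤ B)
    (hB : ∀ s, -B ≤ fhat f s) (hs : Fsubl p f) : FluxNegAfterHit p N 0 R2 (fhat f) := by
  have hpos' : ∀ s, 1 < s → 0 < fhat f s := fun s hs => by
    rw [fhat_of_nonneg (by linarith)]; exact hpos s hs
  obtain ⟨M, hM, hlim⟩ := hs
  obtain ⟨s₀, hs₀⟩ := eventually_atTop.1 ((hlim 1 one_pos).and (eventually_gt_atTop 1))
  have hs1 : 1 < s₀ := (hs₀ s₀ le_rfl).2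
  have hfs : 0 < fstar f s₀ := (hpos s₀ hs1).trans_le (le_fstar hf hs1.le le_rfl)
  refine fluxNegAfterHit_of_rpow_bound (M := M + 1 + fstar f s₀) hp hR2 hpos' hB0 hB
    (by positivity) fun d s h1 hsd => ?_
  rw [fhat_of_nonneg (by linarith)]
  have hs0 : 0 < s := by linarith
  have hd1 : 1 ≤ d ^ (p - 1) := Real.one_le_rpow (by linarith) (by linarith)
  have hsd' : s ^ (p - 1) ≤ d ^ (p - 1) := Real.rpow_le_rpow hs0.le hsd (by linarith)
  rcases le_total s s₀ with h | h
  · have := le_fstar hf h1.le h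
    nlinarith
  · have := (hs₀ s h).1
    rw [div_le_iff₀ (Real.rpow_pos_of_pos hs0 _)] at this
    nlinarith

lemma exists_pohozaev_exponent {p L : ℝ} {n : ℕ} (hp : 1 < p)
    (hL : (L : EReal) < pstar p (n + 1)) :
    ∃ α : ℝ, 0 ≤ α ∧ α * L < n + 1 ∧ n + 1 ≤ p * (1 + α) := by
  rw [pstar] at hL
  split_ifs at hL with h
  · push_cast at h
    rw [EReal.coe_lt_coe_iff, lt_div_iff₀ (by push_cast; linarith)] at hL
    push_cast at hL
    have : 0 ≤ (n + 1 : ℝ) - p := by linarith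
    refine ⟨(n + 1 - p) / p, by positivity, ?_, ?_⟩
    · rw [div_mul_eq_mul_div, div_lt_iff₀ (by linarith)]
      linarith
    · field_simp
      linarith
  · push_cast at h
    exact ⟨0, le_rfl, by rw [zero_mul]; positivity, by linarith⟩

lemma fluxNegAfterHit_of_subc {p B R2 : ℝ} {N : ℕ} {f : ℝ → ℝ} (hp : 1 < p) (hN : 1 ≤ N)
    (hR2 : 0 < R2) (hf : ContinuousOn f (Ici 0)) (hpos : ∀ s, 1 < s → 0 < f s) (hB0 : 0 ≤ B)
    (hB : ∀ s, -B ≤ fhat f s) (hf0 : f 0 = 0) (hs : Fsubc p N f) :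
    FluxNegAfterHit p N 0 R2 (fhat f) := by
  have hpos' : ∀ s, 1 < s → 0 < fhat f s := fun s hs => by
    rw [fhat_of_nonneg (by linarith)]; exact hpos s hs
  have hneg : ∀ s ≤ 0, fhat f s = 0 := fun s hs => by
    rw [fhat]
    split_ifs with h
    · rw [le_antisymm hs h, hf0]
    · rfl
  obtain ⟨n, rfl⟩ : ∃ n, N = n + 1 := ⟨N - 1, by omega⟩
  obtain ⟨η, -, hη0, hη1, L, hLp, hLev⟩ := hs
  obtain ⟨α, hα, hαL, hαp⟩ := exists_pohozaev_exponent hp hLp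
  obtain ⟨s₀, hs₀⟩ := eventually_atTop.1
    ((hLev.and (eventually_gt_atTop 1)).and (eventually_gt_atTop (1 / η)))
  have hs1 : 1 < s₀ := (hs₀ s₀ le_rfl).1.2
  have hηs : ∀ s, s₀ ≤ s → 1 < η * s := fun s h => by
    have := (hs₀ s h).2
    rw [div_lt_iff₀ hη0] at this
    linarith
  have hL : ∀ s, s₀ ≤ s → fstar f s * s ≤ L * Fint f (η * s) := fun s h => by
    have := (hs₀ s h).1.1
    rwa [div_le_iff₀ (Fint_pos hf hpos (hηs s h))] at this
  have hfstar : ∀ s, 1 < s → 0 < fstar f s := fun s hs =>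
    (hpos s hs).trans_le (le_fstar hf hs.le le_rfl)
  have hL0 : 0 < L := by
    have h1 := hfstar s₀ hs1
    have h2 : 0 < fstar f s₀ * s₀ := by positivity
    exact pos_of_mul_pos_left (h2.trans_le (hL s₀ le_rfl))
      (Fint_pos hf hpos (hηs s₀ le_rfl)).le
  obtain ⟨C, hC, hgrowth⟩ := fstar_growth hf hpos hL0 hη1 hs1 (hηs s₀ le_rfl) hL
  obtain ⟨c, hc, hcb⟩ := exists_rpow_le (L := L) hα hαp hC hη1 hR2
  set δ : ℝ := n + 1 - α * L with hδ
  have hδ0 : 0 < δ := by linarith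
  set E : ℝ := α * (fstar f s₀ * s₀) / (n + 1) * R2 ^ (n + 1)
  refine fluxNegAfterHit_of_steep hp hR2 hpos' hneg hB0 hB
    (G := fun d => δ / (L * (n + 1)) * (c * d ^ (p * (1 + α) - α * L)) - E) ?_ ?_
  · refine tendsto_atTop_add_const_right _ _ ?_
    exact ((tendsto_rpow_atTop (by linarith)).const_mul_atTop hc).const_mul_atTop (by positivity)
  · filter_upwards [eventually_ge_atTop s₀] with d hd u S r hr hur hlt
    have hd1 : 1 < d := by linarith
    obtain ⟨r₀, hr₀, hur₀⟩ := S.exists_eq (e := η * d) hr hur (hηs d hd) (by nlinarith)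
    refine le_trans ?_ (S.pohozaev_bound hp hf hpos hα hαL.le hαp hL0 hη1 hs1 (hηs s₀ le_rfl) hL hd
      hr hur hlt hr₀ hur₀)
    have h1 := S.rpow_drop_le hp hpos' ⟨hr₀.1, hr₀.2.le.trans hr.2⟩
      (fun x hx => hlt x ⟨hx.1, hx.2.trans hr₀.2⟩) (Φ := fstar f d) fun s hs' hsd => by
        rw [fhat_of_nonneg (by linarith)]
        exact le_fstar hf hs'.le hsd
    rw [hur₀, show d - η * d = (1 - η) * d by ring] at h1
    have h2 := hcb d r₀ (fstar f d) (by linarith) hr₀.1 (hr₀.2.le.trans hr.2) (hfstar d hd1)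
      (hgrowth d hd) h1
    have h3 : r₀ ^ (n + 1) * (fstar f d * d) ≤ r₀ ^ (n + 1) * (L * Fint f (η * d)) :=
      mul_le_mul_of_nonneg_left (hL d hd) (pow_nonneg hr₀.1.le _)
    have h4 := mul_le_mul_of_nonneg_left (h2.trans h3)
      (show 0 ≤ δ / (L * (n + 1)) by positivity)
    have h5 : δ / (L * (n + 1)) * (r₀ ^ (n + 1) * (L * Fint f (η * d))) =
        δ * Fint f (η * d) / (n + 1) * r₀ ^ (n + 1) := by
      field_simp
    linarith

lemma NeumannSol.cauchySol {p : ℝ} {N : ℕ} {R1 R2 : ℝ} {f u : ℝ → ℝ}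
    (S : NeumannSol p N R1 R2 f u) : CauchySol p N R1 R2 (fhat f) u (u R1) := by
  obtain ⟨h1, h2, h3, h4, -, h5, h6⟩ := S
  refine ⟨h1, h2, rfl, h4, h5, fun x hx => ?_⟩
  rw [fhat_of_nonneg (h3 x ⟨hx.1.le, hx.2⟩).le]
  exact h6 x hx

theorem stmt19 (p : ℝ) (hp : 1 < p) (N : ℕ) (hN : 1 ≤ N)
    (R1 R2 : ℝ) (hR1 : 0 ≤ R1) (hR12 : R1 < R2)
    (f : ℝ → ℝ) (hreg : Freg f) (heq : Feq f) (h0 : Fzero p f)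
    (hball : R1 = 0 → Fsubl p f ∨ Fsubc p N f) :
    ∃ dstar : ℝ, 1 < dstar ∧
      (∀ d : ℝ, dstar ≤ d → ∀ u : ℝ → ℝ, CauchySol p N R1 R2 (fhat f) u d →
        ∀ x ∈ Ioc R1 R2, deriv u x < 0) ∧
      (∀ u : ℝ → ℝ, NeumannSol p N R1 R2 f u → u R1 < dstar) := by
  obtain ⟨hf, -⟩ := hreg
  obtain ⟨hf0, -, -, hpos⟩ := heq
  have hpos' : ∀ s, 1 < s → 0 < fhat f s := fun s hs => by
    rw [fhat_of_nonneg (by linarith)]; exact hpos s hs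
  obtain ⟨B, hB0, hB⟩ := exists_neg_le_fhat hf hpos
  have hR2 : 0 < R2 := hR1.trans_lt hR12
  have key : FluxNegAfterHit p N R1 R2 (fhat f) := by
    rcases hR1.eq_or_lt with rfl | h
    · rcases hball rfl with hs | hs
      · exact fluxNegAfterHit_of_subl hp hR2 hf hpos hB0 hB hs
      · exact fluxNegAfterHit_of_subc hp hN hR2 hf hpos hB0 hB hf0 hs
    · exact fluxNegAfterHit_of_annulus hp h hR12 hpos' hB0 hB
  obtain ⟨D, hD⟩ := eventually_atTop.1 (key.and (eventually_gt_atTop 1))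
  have hmain : ∀ d : ℝ, D ≤ d → ∀ u : ℝ → ℝ, CauchySol p N R1 R2 (fhat f) u d →
      ∀ x ∈ Ioc R1 R2, deriv u x < 0 := fun d hd u S =>
    S.deriv_neg_of_first_hit hR1 hpos' (hD d hd).2 ((hD d hd).1 u S)
  refine ⟨D, (hD D le_rfl).2, hmain, fun u S => ?_⟩
  by_contra! h
  have := hmain _ h u S.cauchySol R2 ⟨hR12, le_rfl⟩
  rw [S.2.2.2.2.1] at this
  exact lt_irrefl _ this
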